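/- Let z ∈ ℂ with z ≠ 0 and set z' = conj(z) (principal series). Then for every n ∈ ℕ, the z-measure M_n is a probability measure on partitions of n: for every partition λ of n, M_n(λ) = (n!/(zz')_n) Π_{□∈λ}(z+c(□))(z'+c(□))/h(□)² is a nonnegative real number, and Σ_{|λ|=n} M_n(λ) = 1. -/

import Mathlib

open scoped Classical

noncomputable section

/-- The content of a cell `c = (i, j)` (0-indexed row `i` and column `j`) of a Young diagram:
`c(□) = column(□) - row(□)`. -/
def cellContent (c : ℕ × ℕ) : ℤ := (c.2 : ℤ) - (c.1 : ℤ)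

/-- The hook length of the cell `c = (i, j)` of the Young diagram `Y`:
`h(□) = λ_i - j + λ'_j - i - 1` in 0-indexed coordinates. -/
def hookLen (Y : YoungDiagram) (c : ℕ × ℕ) : ℕ :=
  (Y.rowLen c.1 - c.2) + (Y.colLen c.2 - c.1) - 1

/-- The product `Π_{□ ∈ λ} (z + c(□)) (z' + c(□)) / h(□)²`. -/
def zWeight (z z' : ℂ) (Y : YoungDiagram) : ℂ :=
  ∏ c ∈ Y.cells, ((z + cellContent c) * (z' + cellContent c) / (hookLen Y c : ℂ) ^ 2)

/-- The finset of squares addable to the Young diagram `Y`: cells `c ∉ Y` such that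
adding `c` to `Y` again yields a Young diagram, i.e. every strictly smaller cell
(in the product order) already belongs to `Y`.  Any such cell has the form
`(i, Y.rowLen i)` for some `i ≤ Y.colLen 0`. -/
def addables (Y : YoungDiagram) : Finset (ℕ × ℕ) :=
  ((Finset.range (Y.colLen 0 + 1)).image fun i => (i, Y.rowLen i)).filter
    fun c => ∀ d : ℕ × ℕ, d ≤ c → d ≠ c → d ∈ Y.cells

/-- Add a square to a Young diagram (when the result is again a Young diagram;
junk value `Y` otherwise). -/
def addBox (Y : YoungDiagram) (c : ℕ × ℕ) : YoungDiagram :=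
  if h : c ∉ Y.cells ∧ ∀ d : ℕ × ℕ, d ≤ c → d ≠ c → d ∈ Y.cells then
    { cells := insert c Y.cells,
      isLowerSet := by
        intro a b hba ha
        simp only [Finset.coe_insert, Set.mem_insert_iff, Finset.mem_coe] at ha ⊢
        rcases ha with rfl | ha
        · by_cases hbc : b = a
          · exact Or.inl hbc
          · exact Or.inr (h.2 b hba hbc)
        · exact Or.inr (Y.isLowerSet hba ha) }
  else Y

/-- The finset of squares removable from the Young diagram `Y`: the corners of `Y`. -/
def removables (Y : YoungDiagram) : Finset (ℕ × ℕ) :=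
  Y.cells.filter fun c => (c.1 + 1, c.2) ∉ Y.cells ∧ (c.1, c.2 + 1) ∉ Y.cells

/-- Remove a square from a Young diagram (when the result is again a Young diagram;
junk value `Y` otherwise). -/
def removeBox (Y : YoungDiagram) (c : ℕ × ℕ) : YoungDiagram :=
  if h : (c.1 + 1, c.2) ∉ Y.cells ∧ (c.1, c.2 + 1) ∉ Y.cells then
    { cells := Y.cells.erase c,
      isLowerSet := by
        intro a b hba ha
        rw [Finset.coe_erase, Set.mem_diff] at ha ⊢
        refine ⟨Y.isLowerSet hba ha.1, ?_⟩
        rintro rfl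
        rcases lt_or_eq_of_le hba with hlt | rfl
        · rcases Prod.lt_iff.mp hlt with ⟨h1, h2⟩ | ⟨h1, h2⟩
          · exact h.1 (Y.isLowerSet (Prod.mk_le_mk.mpr ⟨h1, h2⟩) ha.1)
          · exact h.2 (Y.isLowerSet (Prod.mk_le_mk.mpr ⟨h1, h2⟩) ha.1)
        · exact ha.2 rfl }
  else Y

/-!
The weights `w(Y) = ∏ (z + c) (z' + c) / h ^ 2` satisfy
`(n + 1) ∑_{|Y| = n + 1} w(Y) = (z z' + n) ∑_{|Y| = n} w(Y)`, whence
`n! ∑_{|Y| = n} w(Y) = (z z')_n`. Writing `H` for the hook product and `Y ↗ Y'` for the addition of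
a box, `w(Y') / w(Y) = (z + c) (z' + c) (H(Y) / H(Y')) ^ 2` with `c` the content of the new box, so
the recurrence follows by summing `w(Y') H(Y') / H(Y)` over all pairs `Y ↗ Y'` in both orders, from

* `∑_{Y' : Y ↗ Y'} (z + c) (z' + c) H(Y) / H(Y') = z z' + |Y|`,
* `∑_{Y : Y ↗ Y'} H(Y') / H(Y) = |Y'|`.

By Frobenius' formula `H(Y) = ∏ l_i! / ∏_{i < j} (l_i - l_j)` with `l_i = λ_i + m - i`, and a box
moves a single node `l_i` by one. Hence either sum is a divided difference at the nodes `l_i` of a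
polynomial whose degree exceeds the number of nodes by one, which involves only the first two power
sums of the nodes. For `z' = conj z` the numerators are `|z + c| ^ 2 ≥ 0` and
`(z z')_n = (|z| ^ 2)_n > 0`.
-/

open Finset Polynomial Lagrange

section DividedDifference

variable {ι F : Type*} [DecidableEq ι] [Field F]

/-- The divided difference `P ↦ P[v i : i ∈ s]` of polynomials at the nodes `v i`, written in the
symmetric form `∑ i ∈ s, P (v i) / ∏ j ≠ i, (v i - v j)`, which presumes that the nodes are
distinct. -/
def dividedDifference (s : Finset ι) (v : ι → F) : F[X] →ₗ[F] F :=
  ∑ i ∈ s, nodalWeight s v i • leval (v i)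

lemma dividedDifference_apply (s : Finset ι) (v : ι → F) (P : F[X]) :
    dividedDifference s v P = ∑ i ∈ s, nodalWeight s v i * P.eval (v i) := by
  simp [dividedDifference, LinearMap.sum_apply]

lemma dividedDifference_eq_coeff {s : Finset ι} {v : ι → F} (hv : Set.InjOn v s) {P : F[X]}
    (hP : P.natDegree < #s) : dividedDifference s v P = P.coeff (#s - 1) := by
  have hdeg : P.degree < #s := degree_le_natDegree.trans_lt (by exact_mod_cast hP)
  rw [coeff_eq_sum hv hdeg, dividedDifference_apply]
  refine sum_congr rfl fun i _ ↦ ?_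
  rw [nodalWeight, prod_inv_distrib, mul_comm, div_eq_mul_inv]

lemma dividedDifference_of_monic {s : Finset ι} {v : ι → F} (hv : Set.InjOn v s) {P : F[X]}
    (hP : P.Monic) (hdeg : P.natDegree + 1 = #s) : dividedDifference s v P = 1 := by
  rw [dividedDifference_eq_coeff hv (by omega), ← hdeg, Nat.add_sub_cancel, hP.coeff_natDegree]

lemma dividedDifference_insert_X_sub_C_mul {s : Finset ι} {v : ι → F} {a : ι} (ha : a ∉ s)
    (hv : Set.InjOn v (insert a s : Finset ι)) (P : F[X]) :
    dividedDifference (insert a s) v ((X - C (v a)) * P) = dividedDifference s v P := by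
  simp only [dividedDifference_apply, sum_insert ha, eval_mul, eval_sub, eval_X, eval_C, sub_self,
    zero_mul, mul_zero, zero_add]
  refine sum_congr rfl fun i hi ↦ ?_
  have hia : i ≠ a := ne_of_mem_of_not_mem hi ha
  have hne : v i - v a ≠ 0 := sub_ne_zero.2 fun h ↦
    hia (hv (mem_insert_of_mem hi) (mem_insert_self a s) h)
  rw [nodalWeight, erase_insert_of_ne hia.symm, prod_insert (by simp [ha]), ← nodalWeight]
  field_simp

end DividedDifference

section InterlacingNodes

variable {F : Type*} [Field F] {c : ℕ → F} (b : ℕ → F) {m : ℕ}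

lemma dividedDifference_X_pow_succ_mul (hc : Set.InjOn c (range (m + 1))) (k : ℕ) (P : F[X]) :
    dividedDifference (range (m + 1)) c (X ^ (k + 1) * P) =
      dividedDifference (range m) c (X ^ k * P) +
        c m * dividedDifference (range (m + 1)) c (X ^ k * P) := by
  rw [range_add_one] at hc ⊢
  rw [← dividedDifference_insert_X_sub_C_mul notMem_range_self hc, ← smul_eq_mul (c m),
    ← map_smul, ← map_add, smul_eq_C_mul]
  congr 1
  ring

lemma dividedDifference_X_pow_mul_nodal_succ (hc : Set.InjOn c (range (m + 2))) (k : ℕ) :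
    dividedDifference (range (m + 2)) c (X ^ k * nodal (range (m + 1)) b) =
      dividedDifference (range (m + 1)) c (X ^ k * nodal (range m) b) +
        (c (m + 1) - b m) * dividedDifference (range (m + 2)) c (X ^ k * nodal (range m) b) := by
  have hsplit : X ^ k * nodal (range (m + 1)) b =
      X ^ (k + 1) * nodal (range m) b - b m • (X ^ k * nodal (range m) b) := by
    rw [range_add_one, nodal_insert_eq_nodal notMem_range_self, smul_eq_C_mul]
    ring
  rw [hsplit, map_sub, map_smul, dividedDifference_X_pow_succ_mul hc, smul_eq_mul]
  ring

lemma dividedDifference_nodal (hc : Set.InjOn c (range (m + 1))) :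
    dividedDifference (range (m + 1)) c (nodal (range m) b) = 1 :=
  dividedDifference_of_monic hc nodal_monic (by simp)

lemma dividedDifference_X_mul_nodal_of_card_add_two (hc : Set.InjOn c (range (m + 2))) :
    dividedDifference (range (m + 2)) c (X * nodal (range m) b) = 1 :=
  dividedDifference_of_monic hc (monic_X.mul nodal_monic) <| by
    rw [monic_X.natDegree_mul nodal_monic, natDegree_X, natDegree_nodal, card_range, card_range]
    omega

lemma dividedDifference_X_mul_nodal (hc : Set.InjOn c (range (m + 1))) :
    dividedDifference (range (m + 1)) c (X * nodal (range m) b) =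
      ∑ i ∈ range (m + 1), c i - ∑ i ∈ range m, b i := by
  induction m with
  | zero => simp [dividedDifference_apply, nodalWeight]
  | succ m ih =>
    have hrec := dividedDifference_X_pow_mul_nodal_succ b hc 1
    rw [pow_one] at hrec
    rw [hrec, ih (hc.mono (by simp)), dividedDifference_X_mul_nodal_of_card_add_two b hc,
      sum_range_succ c (m + 1), sum_range_succ b m]
    ring

-- The divided difference of `X ^ k * nodal (range m) b` is the complete symmetric function `h_k` of
-- the difference of the alphabets `c` and `b`; the right-hand side is `2 h_2 = p_1 ^ 2 + p_2`.
lemma two_mul_dividedDifference_X_sq_mul_nodal (hc : Set.InjOn c (range (m + 1))) :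
    2 * dividedDifference (range (m + 1)) c (X ^ 2 * nodal (range m) b) =
      (∑ i ∈ range (m + 1), c i - ∑ i ∈ range m, b i) ^ 2 +
        (∑ i ∈ range (m + 1), c i ^ 2 - ∑ i ∈ range m, b i ^ 2) := by
  induction m with
  | zero =>
    simp only [dividedDifference_apply, nodalWeight, zero_add, range_one, range_zero, sum_singleton,
      sum_empty, erase_singleton, prod_empty, nodal_empty, eval_mul, eval_pow, eval_X, eval_one]
    ring
  | succ m ih =>
    have hc' : Set.InjOn c (range (m + 1)) := hc.mono (by simp)
    have hX_sq := dividedDifference_X_pow_succ_mul hc 1 (nodal (range m) b)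
    rw [pow_one, dividedDifference_X_mul_nodal_of_card_add_two b hc,
      dividedDifference_X_mul_nodal b hc'] at hX_sq
    rw [dividedDifference_X_pow_mul_nodal_succ b hc, hX_sq, mul_add, ih hc',
      sum_range_succ c (m + 1), sum_range_succ b m, sum_range_succ (fun i ↦ c i ^ 2) (m + 1),
      sum_range_succ (fun i ↦ b i ^ 2) m]
    ring

/-- The polynomial `∏ j < m, (X + ε - x j)`, whose values at the nodes `x i` are the numerators of
the ratios of hook products obtained by moving the node `x i` to `x i + ε`. -/
def shiftedNodal (m : ℕ) (x : ℕ → F) (ε : F) : F[X] :=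
  nodal (range m) fun j ↦ x j - ε

variable {x : ℕ → F}

lemma eval_shiftedNodal_eq_zero {i j : ℕ} {ε : F} (hj : j < m) (hij : x i + ε = x j) :
    (shiftedNodal m x ε).eval (x i) = 0 := by
  rw [shiftedNodal, eval_nodal]
  exact prod_eq_zero (mem_range.2 hj) (by rw [← hij]; ring)

lemma eval_shiftedNodal_mul {i : ℕ} (hi : i ≤ m) (ε : F) (hxm : x m = 0) :
    (shiftedNodal m x ε).eval (x i) * (x i + ε) =
      ε * ∏ k ∈ (range (m + 1)).erase i, (x i + ε - x k) := by
  have hfull := mul_prod_erase (range (m + 1)) (fun k ↦ x i + ε - x k)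
    (mem_range.2 (Nat.lt_succ_of_le hi))
  rw [add_sub_cancel_left] at hfull
  rw [hfull, prod_range_succ, hxm, sub_zero, shiftedNodal, eval_nodal]
  congr 1
  exact prod_congr rfl fun j _ ↦ by ring

variable (hx : Set.InjOn x (range (m + 1))) (ε : F)
include hx

lemma dividedDifference_X_mul_shiftedNodal (hxm : x m = 0) :
    dividedDifference (range (m + 1)) x (X * shiftedNodal m x ε) = m * ε := by
  rw [shiftedNodal, dividedDifference_X_mul_nodal _ hx, sum_range_succ, hxm, sum_sub_distrib]
  simp

lemma two_mul_dividedDifference_X_sq_mul_shiftedNodal (hxm : x m = 0) :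
    2 * dividedDifference (range (m + 1)) x (X ^ 2 * shiftedNodal m x ε) =
      (m * ε) ^ 2 + 2 * ε * ∑ i ∈ range m, x i - m * ε ^ 2 := by
  rw [shiftedNodal, two_mul_dividedDifference_X_sq_mul_nodal _ hx]
  simp only [sub_sq, sum_sub_distrib, sum_add_distrib, sum_range_succ, hxm, sum_const, card_range,
    nsmul_eq_mul, ← sum_mul, ← mul_sum]
  ring

lemma two_mul_dividedDifference_mul_mul_shiftedNodal (hxm : x m = 0) (u w : F) :
    2 * dividedDifference (range (m + 1)) x ((X + C u) * (X + C w) * shiftedNodal m x ε) =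
      (m * ε) ^ 2 + 2 * ε * ∑ i ∈ range m, x i - m * ε ^ 2 + 2 * (u + w) * (m * ε) +
        2 * (u * w) := by
  have hexpand : (X + C u) * (X + C w) * shiftedNodal m x ε =
      X ^ 2 * shiftedNodal m x ε + (u + w) • (X * shiftedNodal m x ε) +
        (u * w) • shiftedNodal m x ε := by
    simp only [smul_eq_C_mul, C_add, C_mul]
    ring
  rw [hexpand, map_add, map_add, map_smul, map_smul, mul_add, mul_add,
    two_mul_dividedDifference_X_sq_mul_shiftedNodal hx ε hxm,
    dividedDifference_X_mul_shiftedNodal hx ε hxm, shiftedNodal, dividedDifference_nodal _ hx]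
  simp only [smul_eq_mul]
  ring

end InterlacingNodes

section Vandermonde

variable {ι R : Type*} [LinearOrder ι] [CommRing R]

/-- The Vandermonde product `∏ i < j, (x i - x j)` over the pairs of indices from `s`, with the
sign that makes it positive for strictly decreasing real sequences. -/
def vandermondeProd (s : Finset ι) (x : ι → R) : R :=
  ∏ i ∈ s, ∏ j ∈ s with i < j, (x i - x j)

lemma vandermondeProd_ne_zero [IsDomain R] {s : Finset ι} {x : ι → R} (hx : Set.InjOn x s) :
    vandermondeProd s x ≠ 0 := by
  refine prod_ne_zero_iff.2 fun i hi ↦ prod_ne_zero_iff.2 fun j hj ↦ sub_ne_zero.2 fun h ↦ ?_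
  rw [mem_filter] at hj
  exact hj.2.ne (hx hi hj.1 h)

lemma vandermondeProd_insert {s : Finset ι} {a : ι} (ha : a ∉ s) (x : ι → R) :
    vandermondeProd (insert a s) x =
      vandermondeProd s x * ∏ j ∈ s, if a < j then x a - x j else x j - x a := by
  have hrow (i : ι) : ∏ j ∈ insert a s with i < j, (x i - x j) =
      (if i < a then x i - x a else 1) * ∏ j ∈ s with i < j, (x i - x j) := by
    rw [filter_insert]
    split_ifs with h
    · exact prod_insert (by simp [ha])
    · rw [one_mul]
  simp only [vandermondeProd, hrow, prod_insert ha, lt_irrefl, if_false, one_mul,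
    prod_filter (a < ·), prod_mul_distrib]
  rw [← mul_assoc, ← prod_mul_distrib, mul_comm]
  congr 1
  refine prod_congr rfl fun j hj ↦ ?_
  rcases lt_or_gt_of_ne (ne_of_mem_of_not_mem hj ha) with h | h
  · simp [h, h.not_gt]
  · simp [h, h.not_gt]

lemma vandermondeProd_update_mul {s : Finset ι} {i : ι} (hi : i ∈ s) (x : ι → R) (a : R) :
    vandermondeProd s (Function.update x i a) * ∏ j ∈ s.erase i, (x i - x j) =
      vandermondeProd s x * ∏ j ∈ s.erase i, (a - x j) := by
  obtain ⟨t, hit, rfl⟩ : ∃ t, i ∉ t ∧ insert i t = s := ⟨s.erase i, by simp, insert_erase hi⟩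
  have hne {j : ι} (hj : j ∈ t) : j ≠ i := ne_of_mem_of_not_mem hj hit
  have hoff : vandermondeProd t (Function.update x i a) = vandermondeProd t x :=
    prod_congr rfl fun j hj ↦ prod_congr rfl fun k hk ↦ by
      rw [Function.update_of_ne (hne hj), Function.update_of_ne (hne (mem_filter.1 hk).1)]
  rw [vandermondeProd_insert hit, vandermondeProd_insert hit, hoff, erase_insert hit, mul_assoc,
    mul_assoc, ← prod_mul_distrib, ← prod_mul_distrib]
  congr 1
  refine prod_congr rfl fun j hj ↦ ?_
  rw [Function.update_self, Function.update_of_ne (hne hj)]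
  split_ifs <;> ring

end Vandermonde

section HookFormula

variable {Y : YoungDiagram} {m i j k : ℕ}

lemma lt_rowLen_iff_lt_colLen : j < Y.rowLen i ↔ i < Y.colLen j := by
  rw [← YoungDiagram.mem_iff_lt_rowLen, YoungDiagram.mem_iff_lt_colLen]

lemma rowLen_eq_zero_iff : Y.rowLen i = 0 ↔ Y.colLen 0 ≤ i := by
  rw [← not_lt, ← lt_rowLen_iff_lt_colLen, Nat.pos_iff_ne_zero, not_not]

lemma rowLen_eq_of_forall_mem_iff {a : ℕ} (h : ∀ j, (i, j) ∈ Y ↔ j < a) : Y.rowLen i = a :=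
  eq_of_forall_lt_iff fun j ↦ by rw [← YoungDiagram.mem_iff_lt_rowLen, h]

@[to_additive]
lemma prod_cells_eq_prod_rows {M : Type*} [CommMonoid M] (hm : Y.colLen 0 ≤ m) (f : ℕ × ℕ → M) :
    ∏ c ∈ Y.cells, f c = ∏ i ∈ range m, ∏ j ∈ range (Y.rowLen i), f (i, j) := by
  refine prod_finset_product _ _ (fun i ↦ range (Y.rowLen i)) fun ⟨i, j⟩ ↦ ?_
  rw [YoungDiagram.mem_cells, YoungDiagram.mem_iff_lt_rowLen, mem_range, mem_range,
    iff_and_self]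
  intro hj
  by_contra! hi
  rw [rowLen_eq_zero_iff.2 (hm.trans hi)] at hj
  exact Nat.not_lt_zero j hj

lemma card_eq_sum_rowLen (hm : Y.colLen 0 ≤ m) : Y.card = ∑ i ∈ range m, Y.rowLen i := by
  rw [YoungDiagram.card, card_eq_sum_ones, sum_cells_eq_sum_rows hm]
  simp

lemma hookLen_pos {c : ℕ × ℕ} (hc : c ∈ Y) : 0 < hookLen Y c := by
  have hrow : c.2 < Y.rowLen c.1 := YoungDiagram.mem_iff_lt_rowLen.1 hc
  have hcol : c.1 < Y.colLen c.2 := YoungDiagram.mem_iff_lt_colLen.1 hc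
  simp only [hookLen]
  omega

lemma strictAntiOn_hookLen (Y : YoungDiagram) (i : ℕ) :
    StrictAntiOn (fun j ↦ hookLen Y (i, j)) (range (Y.rowLen i)) := by
  intro j _ k hk hjk
  simp only [coe_range, Set.mem_Iio] at hk
  have hcol : i < Y.colLen k := lt_rowLen_iff_lt_colLen.1 hk
  have hanti : Y.colLen k ≤ Y.colLen j := Y.colLen_anti j k hjk.le
  simp only [hookLen]
  omega

/-- The `β`-numbers `l_i = λ_i + m - i`, `0 ≤ i ≤ m`, of a Young diagram with at most `m + 1` rows:
Frobenius' coordinates, in which the hook product becomes a Vandermonde product. -/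
def betaNumber (m : ℕ) (Y : YoungDiagram) (i : ℕ) : ℕ := Y.rowLen i + (m - i)

lemma strictAntiOn_betaNumber (m : ℕ) (Y : YoungDiagram) :
    StrictAntiOn (betaNumber m Y) (range (m + 1)) := by
  intro i _ k hk hik
  simp only [coe_range, Set.mem_Iio] at hk
  have hanti : Y.rowLen k ≤ Y.rowLen i := Y.rowLen_anti i k hik.le
  simp only [betaNumber]
  omega

lemma injOn_cast_betaNumber {F : Type*} [AddMonoidWithOne F] [CharZero F] (m : ℕ)
    (Y : YoungDiagram) : Set.InjOn (fun i ↦ (betaNumber m Y i : F)) (range (m + 1)) :=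
  fun _ hi _ hk h ↦ (strictAntiOn_betaNumber m Y).injOn hi hk (Nat.cast_injective h)

lemma hookLen_ne_betaNumber_sub (hj : j < Y.rowLen i) (hik : i < k) (hk : k ≤ m) :
    hookLen Y (i, j) ≠ betaNumber m Y i - betaNumber m Y k := by
  have hcol : i < Y.colLen j := lt_rowLen_iff_lt_colLen.1 hj
  have hanti : Y.rowLen k ≤ Y.rowLen i := Y.rowLen_anti i k hik.le
  have hcell : j < Y.rowLen k ↔ k < Y.colLen j := lt_rowLen_iff_lt_colLen
  simp only [hookLen, betaNumber]
  omega

lemma injOn_betaNumber_sub (hi : i ≤ m) :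
    Set.InjOn (fun k ↦ betaNumber m Y i - betaNumber m Y k) (Ioc i m) := by
  have hlt {k : ℕ} (hk : k ∈ Ioc i m) : betaNumber m Y k < betaNumber m Y i :=
    strictAntiOn_betaNumber m Y (by simpa using Nat.lt_succ_of_le hi)
      (by simpa using Nat.lt_succ_of_le (mem_Ioc.1 hk).2) (mem_Ioc.1 hk).1
  intro a ha b hb hab
  have ha' := hlt ha
  have hb' := hlt hb
  simp only [coe_Ioc, Set.mem_Ioc] at ha hb hab
  refine (strictAntiOn_betaNumber m Y).injOn ?_ ?_ (by omega) <;>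
    exact mem_coe.2 (mem_range.2 (by omega))

lemma disjoint_image_hookLen_image_betaNumber_sub :
    Disjoint ((range (Y.rowLen i)).image fun j ↦ hookLen Y (i, j))
      ((Ioc i m).image fun k ↦ betaNumber m Y i - betaNumber m Y k) := by
  simp only [disjoint_left, mem_image, mem_range, mem_Ioc]
  rintro _ ⟨j, hj, rfl⟩ ⟨k, hk, h⟩
  exact hookLen_ne_betaNumber_sub hj hk.1 hk.2 h.symm

lemma image_hookLen_union_image_betaNumber_sub (hm : Y.colLen 0 ≤ m + 1) (hi : i ≤ m) :
    ((range (Y.rowLen i)).image fun j ↦ hookLen Y (i, j)) ∪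
      ((Ioc i m).image fun k ↦ betaNumber m Y i - betaNumber m Y k) =
        Ico 1 (betaNumber m Y i + 1) := by
  refine eq_of_subset_of_card_le (union_subset ?_ ?_) ?_
  · refine image_subset_iff.2 fun j hj ↦ ?_
    have hcol : i < Y.colLen j := lt_rowLen_iff_lt_colLen.1 (mem_range.1 hj)
    have hanti : Y.colLen j ≤ Y.colLen 0 := Y.colLen_anti 0 j j.zero_le
    simp only [hookLen, betaNumber, mem_Ico, mem_range] at hj ⊢
    omega
  · refine image_subset_iff.2 fun k hk ↦ ?_
    simp only [mem_Ioc, mem_Ico] at hk ⊢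
    have hlt : betaNumber m Y k < betaNumber m Y i :=
      strictAntiOn_betaNumber m Y (by simpa using Nat.lt_succ_of_le hi)
        (by simpa using Nat.lt_succ_of_le hk.2) hk.1
    omega
  · rw [card_union_of_disjoint disjoint_image_hookLen_image_betaNumber_sub,
      card_image_of_injOn (strictAntiOn_hookLen Y i).injOn,
      card_image_of_injOn (injOn_betaNumber_sub hi)]
    simp [betaNumber]

lemma prod_hookLen_row_mul_prod_betaNumber_sub (hm : Y.colLen 0 ≤ m + 1) (hi : i ≤ m) :
    (∏ j ∈ range (Y.rowLen i), hookLen Y (i, j)) *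
      ∏ k ∈ Ioc i m, (betaNumber m Y i - betaNumber m Y k) = (betaNumber m Y i).factorial := by
  rw [← prod_Ico_id_eq_factorial, ← image_hookLen_union_image_betaNumber_sub hm hi,
    prod_union disjoint_image_hookLen_image_betaNumber_sub,
    prod_image (strictAntiOn_hookLen Y i).injOn, prod_image (injOn_betaNumber_sub hi)]

/-- The product `∏ h(□)` of the hook lengths of a Young diagram. -/
def hookProd (Y : YoungDiagram) : ℕ := ∏ c ∈ Y.cells, hookLen Y c

lemma hookProd_ne_zero (Y : YoungDiagram) : hookProd Y ≠ 0 :=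
  prod_ne_zero_iff.2 fun _ hc ↦ (hookLen_pos hc).ne'

lemma hookProd_mul_vandermondeProd {R : Type*} [CommRing R] (hm : Y.colLen 0 ≤ m + 1) :
    (hookProd Y : R) * vandermondeProd (range (m + 1)) (fun i ↦ (betaNumber m Y i : R)) =
      ∏ i ∈ range (m + 1), ((betaNumber m Y i).factorial : R) := by
  rw [hookProd, prod_cells_eq_prod_rows hm, vandermondeProd, Nat.cast_prod, ← prod_mul_distrib]
  refine prod_congr rfl fun i hi ↦ ?_
  have hfilter : {k ∈ range (m + 1) | i < k} = Ioc i m := by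
    ext k
    simp only [mem_filter, mem_range, mem_Ioc]
    omega
  rw [← prod_hookLen_row_mul_prod_betaNumber_sub hm (Nat.le_of_lt_succ (mem_range.1 hi)), hfilter,
    Nat.cast_mul, Nat.cast_prod (s := Ioc i m)]
  congr 1
  refine prod_congr rfl fun k hk ↦ (Nat.cast_sub ?_).symm
  rw [mem_Ioc] at hk
  exact (strictAntiOn_betaNumber m Y hi (mem_coe.2 (mem_range.2 (by omega))) hk.1).le

lemma two_mul_sum_betaNumber {R : Type*} [CommSemiring R] (hm : Y.colLen 0 ≤ m) :
    2 * ∑ i ∈ range m, (betaNumber m Y i : R) = 2 * Y.card + m * (m + 1) := by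
  have hstair : 2 * ∑ i ∈ range m, (m - i) = m * (m + 1) := by
    have hreflect := sum_range_reflect id (m + 1)
    simp only [id_eq, Nat.add_sub_cancel] at hreflect
    rw [sum_range_succ, Nat.sub_self, add_zero] at hreflect
    rw [hreflect, mul_comm, sum_range_id_mul_two, Nat.add_sub_cancel, mul_comm]
  have hnat : 2 * ∑ i ∈ range m, betaNumber m Y i = 2 * Y.card + m * (m + 1) := by
    simp only [betaNumber, sum_add_distrib, mul_add 2, ← card_eq_sum_rowLen hm, hstair]
  exact_mod_cast congr_arg (Nat.cast (R := R)) hnat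

lemma betaNumber_self (hm : Y.colLen 0 ≤ m) : betaNumber m Y m = 0 := by
  simp [betaNumber, rowLen_eq_zero_iff.2 hm]

end HookFormula

section AddBox

variable {Y : YoungDiagram} {c : ℕ × ℕ} {m i j : ℕ}

lemma mem_addables : c ∈ addables Y ↔ c ∉ Y ∧ ∀ d ≤ c, d ≠ c → d ∈ Y := by
  obtain ⟨i, j⟩ := c
  simp only [addables, mem_filter, mem_image, mem_range, Prod.mk.injEq, YoungDiagram.mem_cells]
  refine and_congr_left fun hbelow ↦ ⟨?_, fun hij ↦ ⟨i, ?_, rfl, ?_⟩⟩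
  · rintro ⟨_, _, rfl, rfl⟩
    simp [YoungDiagram.mem_iff_lt_rowLen]
  · by_contra! hi
    have hmem : (i - 1, 0) ∈ Y :=
      hbelow _ (Prod.mk_le_mk.2 ⟨by omega, j.zero_le⟩) fun h ↦ by
        rw [Prod.mk.injEq] at h
        omega
    rw [YoungDiagram.mem_iff_lt_colLen] at hmem
    omega
  · rw [YoungDiagram.mem_iff_lt_rowLen, not_lt] at hij
    refine hij.antisymm (le_of_forall_lt fun k hk ↦ YoungDiagram.mem_iff_lt_rowLen.1 ?_)
    exact hbelow _ (Prod.mk_le_mk.2 ⟨le_rfl, hk.le⟩) fun h ↦ hk.ne (Prod.mk.inj h).2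

lemma mk_mem_addables_iff :
    (i, j) ∈ addables Y ↔ Y.rowLen i = j ∧ ∀ k < i, Y.rowLen i < Y.rowLen k := by
  simp only [mem_addables, Prod.forall, Prod.mk_le_mk, YoungDiagram.mem_iff_lt_rowLen, ne_eq,
    Prod.mk.injEq, not_lt]
  constructor
  · rintro ⟨hle, hbelow⟩
    have heq : Y.rowLen i = j := hle.antisymm <| by
      by_contra! h
      exact (hbelow i _ ⟨le_rfl, h.le⟩ (by omega)).false
    exact ⟨heq, fun k hk ↦ heq ▸ hbelow k j ⟨hk.le, le_rfl⟩ (by omega)⟩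
  · rintro ⟨rfl, hrow⟩
    refine ⟨le_rfl, fun k l hkl hne ↦ ?_⟩
    rcases hkl.1.lt_or_eq with hk | rfl
    · exact hkl.2.trans_lt (hrow k hk)
    · omega

lemma mk_mem_removables_iff :
    (i, j) ∈ removables Y ↔ Y.rowLen i = j + 1 ∧ Y.rowLen (i + 1) ≤ j := by
  simp only [removables, mem_filter, YoungDiagram.mem_cells, YoungDiagram.mem_iff_lt_rowLen]
  omega

lemma cells_addBox (hc : c ∈ addables Y) : (addBox Y c).cells = insert c Y.cells := by
  rw [addBox, dif_pos (show c ∉ Y.cells ∧ ∀ d ≤ c, d ≠ c → d ∈ Y.cells from mem_addables.1 hc)]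

lemma cells_removeBox (hc : c ∈ removables Y) : (removeBox Y c).cells = Y.cells.erase c := by
  rw [removeBox, dif_pos (mem_filter.1 hc).2]

lemma card_addBox (hc : c ∈ addables Y) : (addBox Y c).card = Y.card + 1 := by
  rw [YoungDiagram.card, cells_addBox hc, card_insert_of_notMem (mem_addables.1 hc).1]

lemma card_removeBox_add_one (hc : c ∈ removables Y) : (removeBox Y c).card + 1 = Y.card := by
  rw [YoungDiagram.card, cells_removeBox hc, card_erase_add_one (mem_filter.1 hc).1]

lemma mem_removables_addBox (hc : c ∈ addables Y) : c ∈ removables (addBox Y c) := by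
  obtain ⟨i, j⟩ := c
  obtain ⟨rfl, -⟩ := mk_mem_addables_iff.1 hc
  have hanti : Y.rowLen (i + 1) ≤ Y.rowLen i := Y.rowLen_anti _ _ i.le_succ
  rw [removables, cells_addBox hc]
  simp [YoungDiagram.mem_iff_lt_rowLen, hanti]

lemma mem_addables_removeBox (hc : c ∈ removables Y) : c ∈ addables (removeBox Y c) := by
  rw [mem_addables, ← YoungDiagram.mem_cells, cells_removeBox hc]
  refine ⟨notMem_erase c _, fun d hdc hne ↦ ?_⟩
  rw [← YoungDiagram.mem_cells, cells_removeBox hc]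
  exact mem_erase.2 ⟨hne, Y.isLowerSet hdc (mem_filter.1 hc).1⟩

lemma removeBox_addBox (hc : c ∈ addables Y) : removeBox (addBox Y c) c = Y :=
  YoungDiagram.ext <| by
    rw [cells_removeBox (mem_removables_addBox hc), cells_addBox hc,
      erase_insert (mem_addables.1 hc).1]

lemma addBox_removeBox (hc : c ∈ removables Y) : addBox (removeBox Y c) c = Y :=
  YoungDiagram.ext <| by
    rw [cells_addBox (mem_addables_removeBox hc), cells_removeBox hc,
      insert_erase (mem_filter.1 hc).1]

lemma rowLen_addBox (hc : (i, j) ∈ addables Y) :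
    (addBox Y (i, j)).rowLen = Function.update Y.rowLen i (j + 1) := by
  obtain ⟨rfl, -⟩ := mk_mem_addables_iff.1 hc
  ext k
  refine rowLen_eq_of_forall_mem_iff fun l ↦ ?_
  rw [← YoungDiagram.mem_cells, cells_addBox hc, mem_insert, YoungDiagram.mem_cells,
    YoungDiagram.mem_iff_lt_rowLen, Prod.mk.injEq, Function.update_apply]
  split_ifs with hk
  · subst hk
    omega
  · simp [hk]

lemma betaNumber_addBox (hc : (i, j) ∈ addables Y) :
    betaNumber m (addBox Y (i, j)) =
      Function.update (betaNumber m Y) i (betaNumber m Y i + 1) := by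
  ext k
  obtain ⟨rfl, -⟩ := mk_mem_addables_iff.1 hc
  by_cases hk : k = i
  · subst hk
    simp only [betaNumber, rowLen_addBox hc, Function.update_self]
    omega
  · simp [betaNumber, rowLen_addBox hc, hk]

lemma colLen_zero_le_addBox (hc : c ∈ addables Y) : Y.colLen 0 ≤ (addBox Y c).colLen 0 := by
  refine le_of_forall_lt fun k hk ↦ ?_
  rw [← YoungDiagram.mem_iff_lt_colLen, ← YoungDiagram.mem_cells] at hk ⊢
  exact cells_addBox hc ▸ mem_insert_of_mem hk

lemma colLen_zero_addBox_le (hc : (i, j) ∈ addables Y) (hm : Y.colLen 0 ≤ m) (hi : i < m) :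
    (addBox Y (i, j)).colLen 0 ≤ m := by
  rw [← rowLen_eq_zero_iff] at hm ⊢
  rwa [rowLen_addBox hc, Function.update_of_ne hi.ne']

lemma fst_le_colLen_zero (hc : c ∈ addables Y) : c.1 ≤ Y.colLen 0 := by
  by_contra! h
  have hrow := (mk_mem_addables_iff.1 hc).2 _ h
  rw [rowLen_eq_zero_iff.2 le_rfl] at hrow
  exact Nat.not_lt_zero _ hrow

lemma fst_lt_colLen_zero (hc : c ∈ removables Y) : c.1 < Y.colLen 0 :=
  YoungDiagram.mem_iff_lt_colLen.1 <|
    Y.up_left_mem le_rfl c.2.zero_le (mem_filter.1 hc).1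

end AddBox

section HookProdRatio

variable {F : Type*} [Field F] {Y : YoungDiagram} {m i j : ℕ}

lemma eval_shiftedNodal_betaNumber_eq_zero (hi : i ≤ m) (h : (i, Y.rowLen i) ∉ addables Y) :
    (shiftedNodal m (fun k ↦ (betaNumber m Y k : F)) 1).eval (betaNumber m Y i : F) = 0 := by
  rw [mk_mem_addables_iff] at h
  push Not at h
  obtain ⟨k, hki, hle⟩ := h rfl
  have hprev : Y.rowLen (i - 1) = Y.rowLen i :=
    ((Y.rowLen_anti k (i - 1) (by omega)).trans hle).antisymm (Y.rowLen_anti _ _ (i.sub_le 1))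
  refine eval_shiftedNodal_eq_zero (x := fun k ↦ (betaNumber m Y k : F)) (j := i - 1) (by omega) ?_
  have hbeta : betaNumber m Y i + 1 = betaNumber m Y (i - 1) := by
    simp only [betaNumber]
    omega
  exact_mod_cast congr_arg (Nat.cast (R := F)) hbeta

lemma betaNumber_mul_eval_shiftedNodal_eq_zero (hm : Y.colLen 0 ≤ m) (hi : i ≤ m)
    (h : ∀ j, (i, j) ∉ removables Y) :
    (betaNumber m Y i : F) * (betaNumber m Y i - 1) *
      (shiftedNodal m (fun k ↦ (betaNumber m Y k : F)) (-1)).eval (betaNumber m Y i : F) = 0 := by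
  have hnext : Y.rowLen i = Y.rowLen (i + 1) := by
    have hanti : Y.rowLen (i + 1) ≤ Y.rowLen i := Y.rowLen_anti _ _ i.le_succ
    have hi' := h (Y.rowLen i - 1)
    rw [mk_mem_removables_iff] at hi'
    omega
  have hlast : Y.rowLen m = 0 := rowLen_eq_zero_iff.2 hm
  obtain rfl | him := hi.eq_or_lt
  · simp [betaNumber_self hm]
  obtain rfl | him := (Nat.succ_le_of_lt him).eq_or_lt
  · simp [betaNumber, hnext, hlast]
  · refine mul_eq_zero_of_right _ <| eval_shiftedNodal_eq_zero
      (x := fun k ↦ (betaNumber m Y k : F)) (j := i + 1) him ?_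
    have hbeta : betaNumber m Y i = betaNumber m Y (i + 1) + 1 := by
      simp only [betaNumber]
      omega
    rw [← sub_eq_add_neg, sub_eq_iff_eq_add, hbeta, Nat.cast_succ]

variable [CharZero F]

lemma hookProd_addBox_mul (hc : (i, j) ∈ addables Y) (hi : i ≤ m)
    (hm : (addBox Y (i, j)).colLen 0 ≤ m + 1) :
    (hookProd (addBox Y (i, j)) : F) *
        ∏ k ∈ (range (m + 1)).erase i, ((betaNumber m Y i : F) + 1 - betaNumber m Y k) =
      (betaNumber m Y i + 1) * hookProd Y *
        ∏ k ∈ (range (m + 1)).erase i, ((betaNumber m Y i : F) - betaNumber m Y k) := by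
  have hmem : i ∈ range (m + 1) := mem_range.2 (Nat.lt_succ_of_le hi)
  set x : ℕ → F := fun k ↦ betaNumber m Y k with hx_def
  have hx' : (fun k ↦ (betaNumber m (addBox Y (i, j)) k : F)) = Function.update x i (x i + 1) := by
    ext k
    rw [betaNumber_addBox hc, Function.update_apply, Function.update_apply]
    split_ifs <;> simp [hx_def]
  have hY := hookProd_mul_vandermondeProd (R := F) ((colLen_zero_le_addBox hc).trans hm)
  have hY' := hookProd_mul_vandermondeProd (R := F) hm
  have hfactorial : ∏ k ∈ range (m + 1), ((betaNumber m (addBox Y (i, j)) k).factorial : F) =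
      (x i + 1) * ∏ k ∈ range (m + 1), ((betaNumber m Y k).factorial : F) := by
    rw [← mul_prod_erase _ _ hmem, ← mul_prod_erase _ _ hmem, betaNumber_addBox hc,
      Function.update_self, Nat.factorial_succ, ← mul_assoc]
    push_cast
    congr 1
    exact prod_congr rfl fun k hk ↦ by rw [Function.update_of_ne (ne_of_mem_erase hk)]
  have hmove := vandermondeProd_update_mul hmem x (x i + 1)
  rw [hx', hfactorial, ← hY] at hY'
  refine mul_left_cancel₀ (vandermondeProd_ne_zero (injOn_cast_betaNumber (F := F) m Y)) ?_
  linear_combination (∏ k ∈ (range (m + 1)).erase i, (x i - x k)) * hY' -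
    (hookProd (addBox Y (i, j)) : F) * hmove

lemma prod_erase_betaNumber_sub_ne_zero (hi : i ≤ m) :
    ∏ k ∈ (range (m + 1)).erase i, ((betaNumber m Y i : F) - betaNumber m Y k) ≠ 0 :=
  prod_ne_zero_iff.2 fun k hk ↦ sub_ne_zero.2 fun h ↦ ne_of_mem_erase hk <|
    (injOn_cast_betaNumber m Y (by simpa using Nat.lt_succ_of_le hi) (mem_of_mem_erase hk) h).symm

lemma hookProd_div_hookProd_addBox (hc : (i, j) ∈ addables Y) (hm : Y.colLen 0 ≤ m) :
    (hookProd Y : F) / hookProd (addBox Y (i, j)) =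
      nodalWeight (range (m + 1)) (fun k ↦ (betaNumber m Y k : F)) i *
        (shiftedNodal m (fun k ↦ (betaNumber m Y k : F)) 1).eval (betaNumber m Y i : F) := by
  have hi : i ≤ m := (fst_le_colLen_zero hc).trans hm
  have hratio := hookProd_addBox_mul (F := F) hc hi
    (colLen_zero_addBox_le hc (hm.trans m.le_succ) (Nat.lt_succ_of_le hi))
  have heval := eval_shiftedNodal_mul (x := fun k ↦ (betaNumber m Y k : F)) hi 1
    (by simp [betaNumber_self hm])
  rw [one_mul] at heval
  have hpos : (betaNumber m Y i : F) + 1 ≠ 0 := Nat.cast_add_one_ne_zero _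
  rw [nodalWeight, prod_inv_distrib, div_eq_iff (Nat.cast_ne_zero.2 (hookProd_ne_zero _)),
    mul_assoc, inv_mul_eq_div, eq_div_iff (prod_erase_betaNumber_sub_ne_zero hi)]
  refine mul_left_cancel₀ hpos ?_
  linear_combination -hratio - (hookProd (addBox Y (i, j)) : F) * heval

lemma hookProd_mul_removeBox (hc : (i, j) ∈ removables Y) (hi : i ≤ m)
    (hm : Y.colLen 0 ≤ m + 1) :
    (hookProd Y : F) *
        ∏ k ∈ (range (m + 1)).erase i, ((betaNumber m Y i : F) - betaNumber m Y k) =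
      betaNumber m Y i * hookProd (removeBox Y (i, j)) *
        ∏ k ∈ (range (m + 1)).erase i, ((betaNumber m Y i : F) - 1 - betaNumber m Y k) := by
  have hadd := mem_addables_removeBox hc
  have hratio := hookProd_addBox_mul (F := F) hadd hi (by rwa [addBox_removeBox hc])
  have hbeta := betaNumber_addBox (m := m) hadd
  rw [addBox_removeBox hc] at hratio hbeta
  have hoff {k : ℕ} (hk : k ∈ (range (m + 1)).erase i) :
      betaNumber m Y k = betaNumber m (removeBox Y (i, j)) k := by
    rw [hbeta, Function.update_of_ne (ne_of_mem_erase hk)]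
  have hself : (betaNumber m Y i : F) = betaNumber m (removeBox Y (i, j)) i + 1 := by
    rw [hbeta, Function.update_self, Nat.cast_succ]
  rw [hself, add_sub_cancel_right, prod_congr rfl fun k hk ↦ by rw [hoff hk], hratio]
  congr 1
  exact prod_congr rfl fun k hk ↦ by rw [hoff hk]

lemma hookProd_div_hookProd_removeBox (hc : (i, j) ∈ removables Y) (hm : Y.colLen 0 ≤ m) :
    (hookProd Y : F) / hookProd (removeBox Y (i, j)) =
      -(nodalWeight (range (m + 1)) (fun k ↦ (betaNumber m Y k : F)) i *
        (betaNumber m Y i * (betaNumber m Y i - 1) *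
          (shiftedNodal m (fun k ↦ (betaNumber m Y k : F)) (-1)).eval (betaNumber m Y i : F))) := by
  have hi : i ≤ m := (fst_lt_colLen_zero hc).le.trans hm
  have hratio := hookProd_mul_removeBox (F := F) hc hi (hm.trans m.le_succ)
  have heval := eval_shiftedNodal_mul (x := fun k ↦ (betaNumber m Y k : F)) hi (-1)
    (by simp [betaNumber_self hm])
  simp only [← sub_eq_add_neg] at heval
  rw [nodalWeight, prod_inv_distrib, div_eq_iff (Nat.cast_ne_zero.2 (hookProd_ne_zero _)),
    inv_mul_eq_div, ← neg_div, div_mul_eq_mul_div,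
    eq_div_iff (prod_erase_betaNumber_sub_ne_zero hi), hratio]
  linear_combination (betaNumber m Y i : F) * hookProd (removeBox Y (i, j)) * heval

end HookProdRatio

section BoxSums

variable {F : Type*} [Field F] [CharZero F] (Y : YoungDiagram)

lemma sum_addables_content_mul_hookProd_div (z z' : F) :
    ∑ c ∈ addables Y,
      (z + cellContent c) * (z' + cellContent c) * ((hookProd Y : F) / hookProd (addBox Y c)) =
        z * z' + Y.card := by
  set m := Y.colLen 0 with hm
  set x : ℕ → F := fun k ↦ betaNumber m Y k with hx
  have hsum : ∑ c ∈ addables Y,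
      (z + cellContent c) * (z' + cellContent c) * ((hookProd Y : F) / hookProd (addBox Y c)) =
        dividedDifference (range (m + 1)) x
          ((X + C (z - m)) * (X + C (z' - m)) * shiftedNodal m x 1) := by
    rw [dividedDifference_apply]
    refine sum_of_injOn Prod.fst ?_ ?_ ?_ ?_
    · rintro ⟨i, j⟩ hc ⟨k, l⟩ hd rfl
      rw [← (mk_mem_addables_iff.1 hc).1, ← (mk_mem_addables_iff.1 hd).1]
    · exact fun c hc ↦ by simpa using Nat.lt_succ_of_le (fst_le_colLen_zero hc)
    · intro i hi hnot
      rw [eval_mul, eval_shiftedNodal_betaNumber_eq_zero (Nat.le_of_lt_succ (mem_range.1 hi))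
        fun h ↦ hnot ⟨_, h, rfl⟩, mul_zero, mul_zero]
    · rintro ⟨i, j⟩ hc
      have hcontent : (cellContent (i, j) : F) = x i - m := by
        have hi : i ≤ m := fst_le_colLen_zero hc
        rw [hx, ← (mk_mem_addables_iff.1 hc).1]
        simp only [cellContent, betaNumber, Nat.cast_add, Nat.cast_sub hi]
        push_cast
        ring
      rw [hookProd_div_hookProd_addBox hc hm.ge, hcontent]
      simp only [hx, eval_mul, eval_add, eval_X, eval_C]
      ring
  have hvalue := two_mul_dividedDifference_mul_mul_shiftedNodal
    (injOn_cast_betaNumber m Y) (1 : F) (by simp [betaNumber_self hm.ge]) (z - m) (z' - m)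
  have hcard := two_mul_sum_betaNumber (R := F) hm.ge
  rw [hsum]
  refine mul_left_cancel₀ (two_ne_zero (α := F)) ?_
  linear_combination hvalue + hcard

lemma sum_removables_hookProd_div :
    ∑ c ∈ removables Y, (hookProd Y : F) / hookProd (removeBox Y c) = Y.card := by
  set m := Y.colLen 0 with hm
  set x : ℕ → F := fun k ↦ betaNumber m Y k with hx
  have hsum : ∑ c ∈ removables Y, (hookProd Y : F) / hookProd (removeBox Y c) =
      -dividedDifference (range (m + 1)) x
          ((X + C 0) * (X + C (-1)) * shiftedNodal m x (-1)) := by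
    rw [dividedDifference_apply, ← sum_neg_distrib]
    refine sum_of_injOn Prod.fst ?_ ?_ ?_ ?_
    · rintro ⟨i, j⟩ hc ⟨k, l⟩ hd rfl
      have hj := (mk_mem_removables_iff.1 hc).1
      have hl := (mk_mem_removables_iff.1 hd).1
      exact Prod.ext rfl (by simpa using hj.symm.trans hl)
    · exact fun c hc ↦ by simpa using Nat.lt_succ_of_lt (fst_lt_colLen_zero hc)
    · intro i hi hnot
      have hzero := betaNumber_mul_eval_shiftedNodal_eq_zero (F := F) hm.ge
        (Nat.le_of_lt_succ (mem_range.1 hi)) fun j h ↦ hnot ⟨_, h, rfl⟩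
      simp [hx, ← sub_eq_add_neg, hzero]
    · rintro ⟨i, j⟩ hc
      rw [hookProd_div_hookProd_removeBox hc hm.ge]
      simp [hx, sub_eq_add_neg]
  have hvalue := two_mul_dividedDifference_mul_mul_shiftedNodal
    (injOn_cast_betaNumber m Y) (-1 : F) (by simp [betaNumber_self hm.ge]) 0 (-1)
  have hcard := two_mul_sum_betaNumber (R := F) hm.ge
  rw [hsum]
  refine mul_left_cancel₀ (two_ne_zero (α := F)) ?_
  linear_combination -hvalue + hcard

end BoxSums

section Recurrence

variable {Y : YoungDiagram} {n : ℕ}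

lemma succ_mul_succ_le_card {i j : ℕ} (h : (i, j) ∈ Y) : (i + 1) * (j + 1) ≤ Y.card := by
  rw [← card_range (i + 1), ← card_range (j + 1), ← card_product]
  refine card_le_card fun d hd ↦ Y.up_left_mem ?_ ?_ h
  · exact Nat.le_of_lt_succ (mem_range.1 (mem_product.1 hd).1)
  · exact Nat.le_of_lt_succ (mem_range.1 (mem_product.1 hd).2)

lemma cells_subset_range_product (h : Y.card = n) : Y.cells ⊆ range n ×ˢ range n := by
  rintro ⟨i, j⟩ hij
  have hcard := (succ_mul_succ_le_card hij).trans h.le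
  exact mk_mem_product (mem_range.2 (by nlinarith)) (mem_range.2 (by nlinarith))

lemma finite_setOf_card_eq (n : ℕ) : {Y : YoungDiagram | Y.card = n}.Finite :=
  ((range n ×ˢ range n).powerset.finite_toSet.preimage
    fun _ _ _ _ ↦ YoungDiagram.ext).subset fun _ hY ↦
      mem_coe.2 (mem_powerset.2 (cells_subset_range_product hY))

/-- The Young diagrams with `n` squares, which stand for the partitions of `n`. -/
def diagramsOfCard (n : ℕ) : Finset YoungDiagram := (finite_setOf_card_eq n).toFinset

lemma mem_diagramsOfCard : Y ∈ diagramsOfCard n ↔ Y.card = n := by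
  simp [diagramsOfCard]

lemma diagramsOfCard_zero : diagramsOfCard 0 = {⊥} := by
  ext Y
  rw [mem_diagramsOfCard, mem_singleton, YoungDiagram.card, card_eq_zero, YoungDiagram.ext_iff,
    YoungDiagram.cells_bot]

lemma sum_sigma_addables_eq_sum_sigma_removables {M : Type*} [AddCommMonoid M] (n : ℕ)
    (f : YoungDiagram → YoungDiagram → ℕ × ℕ → M) :
    ∑ Y ∈ diagramsOfCard n, ∑ c ∈ addables Y, f Y (addBox Y c) c =
      ∑ Y ∈ diagramsOfCard (n + 1), ∑ c ∈ removables Y, f (removeBox Y c) Y c := by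
  rw [sum_sigma', sum_sigma']
  refine sum_bij' (fun p _ ↦ ⟨addBox p.1 p.2, p.2⟩) (fun p _ ↦ ⟨removeBox p.1 p.2, p.2⟩)
    ?_ ?_ ?_ ?_ ?_ <;> rintro ⟨Y, c⟩ hp <;> rw [mem_sigma, mem_diagramsOfCard] at hp
  · exact mem_sigma.2 ⟨mem_diagramsOfCard.2 (by rw [card_addBox hp.2, hp.1]),
      mem_removables_addBox hp.2⟩
  · refine mem_sigma.2 ⟨mem_diagramsOfCard.2 ?_, mem_addables_removeBox hp.2⟩
    exact Nat.add_right_cancel ((card_removeBox_add_one hp.2).trans hp.1)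
  · simp [removeBox_addBox hp.2]
  · simp [addBox_removeBox hp.2]
  · simp [removeBox_addBox hp.2]

variable (z z' : ℂ)

lemma zWeight_eq_div (Y : YoungDiagram) :
    zWeight z z' Y =
      (∏ c ∈ Y.cells, (z + cellContent c) * (z' + cellContent c)) / (hookProd Y : ℂ) ^ 2 := by
  rw [zWeight, prod_div_distrib, prod_pow, hookProd, Nat.cast_prod]

lemma zWeight_addBox {c : ℕ × ℕ} (hc : c ∈ addables Y) :
    zWeight z z' (addBox Y c) =
      zWeight z z' Y * ((z + cellContent c) * (z' + cellContent c)) *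
        ((hookProd Y : ℂ) / hookProd (addBox Y c)) ^ 2 := by
  have hY : (hookProd Y : ℂ) ≠ 0 := Nat.cast_ne_zero.2 (hookProd_ne_zero Y)
  rw [zWeight_eq_div, zWeight_eq_div, cells_addBox hc, prod_insert (mem_addables.1 hc).1]
  field_simp

lemma succ_mul_sum_zWeight (n : ℕ) :
    (n + 1 : ℂ) * ∑ Y ∈ diagramsOfCard (n + 1), zWeight z z' Y =
      (z * z' + n) * ∑ Y ∈ diagramsOfCard n, zWeight z z' Y := by
  have hdown {Y : YoungDiagram} (hY : Y ∈ diagramsOfCard (n + 1)) :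
      (n + 1 : ℂ) * zWeight z z' Y =
        ∑ c ∈ removables Y, zWeight z z' Y * (hookProd Y / hookProd (removeBox Y c)) := by
    rw [← mul_sum, sum_removables_hookProd_div, mem_diagramsOfCard.1 hY, mul_comm, Nat.cast_succ]
  have hup {Y : YoungDiagram} (hY : Y ∈ diagramsOfCard n) :
      (z * z' + n) * zWeight z z' Y =
        ∑ c ∈ addables Y, zWeight z z' (addBox Y c) * (hookProd (addBox Y c) / hookProd Y) := by
    rw [← mem_diagramsOfCard.1 hY, ← sum_addables_content_mul_hookProd_div, sum_mul]
    refine sum_congr rfl fun c hc ↦ ?_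
    have hH : (hookProd Y : ℂ) ≠ 0 := Nat.cast_ne_zero.2 (hookProd_ne_zero Y)
    have hHc : (hookProd (addBox Y c) : ℂ) ≠ 0 := Nat.cast_ne_zero.2 (hookProd_ne_zero _)
    rw [zWeight_addBox z z' hc]
    field_simp
  rw [mul_sum, mul_sum, sum_congr rfl fun Y ↦ hdown, sum_congr rfl fun Y ↦ hup]
  exact (sum_sigma_addables_eq_sum_sigma_removables n
    fun Y Y' _ ↦ zWeight z z' Y' * ((hookProd Y' : ℂ) / hookProd Y)).symm

lemma factorial_mul_sum_zWeight (n : ℕ) :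
    (n.factorial : ℂ) * ∑ Y ∈ diagramsOfCard n, zWeight z z' Y =
      (ascPochhammer ℂ n).eval (z * z') := by
  induction n with
  | zero => simp [diagramsOfCard_zero, zWeight]
  | succ n ih =>
    rw [ascPochhammer_succ_eval, ← ih, Nat.factorial_succ, Nat.cast_mul, Nat.cast_succ]
    linear_combination (n.factorial : ℂ) * succ_mul_sum_zWeight z z' n

end Recurrence

section PrincipalSeries

variable (z : ℂ)

lemma zWeight_conj_eq_ofReal (Y : YoungDiagram) :
    zWeight z (starRingEnd ℂ z) Y =
      ((∏ c ∈ Y.cells, Complex.normSq (z + cellContent c) / (hookLen Y c : ℝ) ^ 2 : ℝ) : ℂ) := by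
  rw [zWeight, Complex.ofReal_prod]
  refine prod_congr rfl fun c _ ↦ ?_
  rw [Complex.ofReal_div, ← Complex.mul_conj, map_add, map_intCast]
  push_cast
  rfl

lemma ascPochhammer_eval_mul_conj_eq_ofReal (n : ℕ) :
    (ascPochhammer ℂ n).eval (z * starRingEnd ℂ z) =
      ((ascPochhammer ℝ n).eval (Complex.normSq z) : ℝ) := by
  rw [Complex.mul_conj, ← ascPochhammer_map Complex.ofRealHom, eval_map,
    ← Complex.ofRealHom_eq_coe, eval₂_hom, Complex.ofRealHom_eq_coe]

end PrincipalSeries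

/-- **principal series.** Let `z ≠ 0` and `z' = conj z`.  Then for every `n`,
the z-measure `M_n(λ) = (n!/(zz')_n) Π_{□∈λ}(z+c(□))(z'+c(□))/h(□)²` is a nonnegative real
number for every partition `λ` of `n`, and `Σ_{|λ|=n} M_n(λ) = 1`. -/
theorem zMeasure_principal_series_prob (z : ℂ) (hz : z ≠ 0) (n : ℕ) :
    (∀ Y : YoungDiagram, Y.card = n →
      ∃ r : ℝ, 0 ≤ r ∧
        (n.factorial : ℂ) / (ascPochhammer ℂ n).eval (z * (starRingEnd ℂ) z) *
          zWeight z ((starRingEnd ℂ) z) Y = (r : ℂ)) ∧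
    ∑' Y : {Y : YoungDiagram // Y.card = n},
        (n.factorial : ℂ) / (ascPochhammer ℂ n).eval (z * (starRingEnd ℂ) z) *
          zWeight z ((starRingEnd ℂ) z) Y.1 = 1 := by
  have hpos : 0 < (ascPochhammer ℝ n).eval (Complex.normSq z) :=
    ascPochhammer_pos n _ (Complex.normSq_pos.2 hz)
  refine ⟨fun Y _ ↦ ?_, ?_⟩
  · rw [zWeight_conj_eq_ofReal, ascPochhammer_eval_mul_conj_eq_ofReal]
    refine ⟨n.factorial / (ascPochhammer ℝ n).eval (Complex.normSq z) *
      ∏ c ∈ Y.cells, Complex.normSq (z + cellContent c) / (hookLen Y c : ℝ) ^ 2, ?_, by simp⟩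
    exact mul_nonneg (by positivity)
      (prod_nonneg fun c _ ↦ div_nonneg (Complex.normSq_nonneg _) (by positivity))
  · have hne : (ascPochhammer ℂ n).eval (z * starRingEnd ℂ z) ≠ 0 := by
      rw [ascPochhammer_eval_mul_conj_eq_ofReal]
      exact Complex.ofReal_ne_zero.2 hpos.ne'
    have hfintype : Fintype {Y : YoungDiagram // Y.card = n} :=
      Fintype.subtype (diagramsOfCard n) fun _ ↦ mem_diagramsOfCard
    rw [tsum_fintype, ← sum_subtype (diagramsOfCard n) (fun _ ↦ mem_diagramsOfCard)
      fun Y ↦ (n.factorial : ℂ) / (ascPochhammer ℂ n).eval (z * starRingEnd ℂ z) *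
        zWeight z (starRingEnd ℂ z) Y, ← mul_sum, div_mul_eq_mul_div, factorial_mul_sum_zWeight,
      div_self hne]

end
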